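/- The LLS sequence of the sail of a pair of lines is the concatenation of the continued fractions of α and −β (Lemma 1 of the paper, in coordinates): let α > 1 and −1 < β < 0 be irrational, with α = [a₀; a₁, a₂, …] (convergents pₖ/qₖ) and −β = [0; b₁, b₂, …] (convergents p̃ₖ/q̃ₖ). Order the sail vertices of the angle {(x, y) : x > 0, βx < y < αx} as the bi-infinite sequence V₋ₖ = (q̃₂ₖ, −p̃₂ₖ) for k ≥ 1, V₀ = (1, 0), Vₖ = (q₂ₖ₋₂, p₂ₖ₋₂) for k ≥ 1. Then: ll(Vₖ₋₁Vₖ) = a₂ₖ₋₂ for all k ≥ 1; lsin∠Vₖ₋₁VₖVₖ₊₁ = a₂ₖ₋₁ for all k ≥ 1; lsin∠V₋ₖ₋₁V₋ₖV₋ₖ₊₁ = b₂ₖ₊₁ for all k ≥ 0; and ll(V₋ₖV₋ₖ₊₁) = b₂ₖ for all k ≥ 1. Hence the LLS sequence of this sail is …, b₄, b₃, b₂, b₁, a₀, a₁, a₂, a₃, …. -/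

import Mathlib

/-!
Both continued fractions drive one and the same two-sided recurrence. Put `cₙ = aₙ` for `n ≥ 0` and
`c₋ₙ = bₙ` for `n ≥ 1`, start from `e₀ = (1, 0)`, `e₁ = (0, 1)`, and solve
`eₙ₊₂ = cₙ eₙ₊₁ + eₙ` in both directions: upwards one finds `eₙ₊₂ = (qₙ, pₙ)`, downwards
`e₋ₙ = (-1)ⁿ (q̃ₙ, -p̃ₙ)`, so the sail is `Vₖ = e₂ₖ` for every integer `k`. Consecutive vectors
`eₙ`, `eₙ₊₁` always form a basis of `ℤ²`, hence the edge `eₙ₊₂ - eₙ = cₙ eₙ₊₁` has integer length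
`cₙ`, and the integer sine between this edge and the next one is
`|det (eₙ₊₁, eₙ₊₃)| = cₙ₊₁ |det (eₙ₊₁, eₙ₊₂)| = cₙ₊₁`.
-/

/-- The integer length of the segment `PQ` between two lattice points: the number of lattice
points in the open segment plus one, equivalently the gcd of the coordinates of `Q - P`. -/
def llen (P Q : ℤ × ℤ) : ℕ := Int.gcd (Q.1 - P.1) (Q.2 - P.2)

/-- The determinant of the 2×2 matrix with columns `u` and `v`. -/
def det2 (u v : ℤ × ℤ) : ℤ := u.1 * v.2 - u.2 * v.1

/-- The integer sine of the angle `∠ABC`. -/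
noncomputable def lsin (A B C : ℤ × ℤ) : ℚ :=
  (|det2 (A - B) (C - B)| : ℚ) / ((llen A B : ℚ) * (llen B C : ℚ))

/-- `a` is the sequence of partial quotients of the (regular) continued fraction expansion
`ξ = [a₀; a₁, a₂, …]`. -/
def IsCFExpansion (ξ : ℝ) (a : ℕ → ℤ) : Prop :=
  ∃ w : ℕ → ℝ, w 0 = ξ ∧ ∀ n, a n = ⌊w n⌋ ∧ w (n + 1) = 1 / (w n - (a n : ℝ))

/-- `p k / q k` are the convergents of the continued fraction with partial quotients `a`. -/
def IsConvergents (a : ℕ → ℤ) (p q : ℕ → ℤ) : Prop :=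
  p 0 = a 0 ∧ q 0 = 1 ∧ p 1 = a 1 * a 0 + 1 ∧ q 1 = a 1 ∧
    ∀ k : ℕ, p (k + 2) = a (k + 2) * p (k + 1) + p k ∧
      q (k + 2) = a (k + 2) * q (k + 1) + q k


section LatticeVectors

theorem det2_neg_left (u v : ℤ × ℤ) : det2 (-u) v = -det2 u v := by
  simp only [det2, Prod.fst_neg, Prod.snd_neg]
  ring

theorem det2_smul_smul (m n : ℤ) (u v : ℤ × ℤ) :
    det2 (m • u) (n • v) = m * n * det2 u v := by
  simp only [det2, Prod.smul_fst, Prod.smul_snd, smul_eq_mul]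
  ring

theorem isCoprime_of_isUnit_det2 {u v : ℤ × ℤ} (h : IsUnit (det2 u v)) :
    IsCoprime u.1 u.2 := by
  obtain ⟨d, hd⟩ := h.exists_left_inv
  refine ⟨d * v.2, -(d * v.1), ?_⟩
  rw [det2] at hd
  linear_combination hd

theorem llen_eq_abs_of_sub_eq_smul {P Q u : ℤ × ℤ} {m : ℤ} (hu : IsCoprime u.1 u.2)
    (h : Q - P = m • u) : (llen P Q : ℤ) = |m| := by
  rw [llen, ← Prod.fst_sub, ← Prod.snd_sub, h, Prod.smul_fst, Prod.smul_snd, smul_eq_mul,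
    smul_eq_mul, Int.gcd_mul_left, Int.isCoprime_iff_gcd_eq_one.mp hu, mul_one,
    Int.natCast_natAbs]

theorem lsin_eq_abs_det2_of_sub_eq_smul {A B C u v : ℤ × ℤ} {m n : ℤ} (hm : m ≠ 0) (hn : n ≠ 0)
    (hu : IsCoprime u.1 u.2) (hv : IsCoprime v.1 v.2) (hAB : B - A = m • u)
    (hBC : C - B = n • v) : lsin A B C = (|det2 u v| : ℤ) := by
  have hAB_len : (llen A B : ℚ) = |(m : ℚ)| := by
    exact_mod_cast llen_eq_abs_of_sub_eq_smul hu hAB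
  have hBC_len : (llen B C : ℚ) = |(n : ℚ)| := by
    exact_mod_cast llen_eq_abs_of_sub_eq_smul hv hBC
  have hdet : det2 (A - B) (C - B) = -(m * n * det2 u v) := by
    rw [← neg_sub B A, det2_neg_left, hAB, hBC, det2_smul_smul]
  have hmn : |(m : ℚ)| * |(n : ℚ)| ≠ 0 := by positivity
  rw [lsin, hAB_len, hBC_len, hdet, div_eq_iff hmn]
  push_cast
  rw [abs_neg, abs_mul, abs_mul, mul_comm]

end LatticeVectors

/-- A two-sided sequence of lattice vectors with `eₙ₊₂ = cₙ eₙ₊₁ + eₙ` whose first two terms form a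
basis of `ℤ²`. Along such a sequence, the points of even index are the vertices of the sail and
those of odd index the edge directions. -/
structure IsUnimodularChain (c : ℤ → ℤ) (e : ℤ → ℤ × ℤ) : Prop where
  add_two : ∀ n, e (n + 2) = c n • e (n + 1) + e n
  isUnit_det2_zero : IsUnit (det2 (e 0) (e 1))

namespace IsUnimodularChain

variable {c : ℤ → ℤ} {e : ℤ → ℤ × ℤ}

theorem sub_eq_smul (h : IsUnimodularChain c e) (n : ℤ) : e (n + 2) - e n = c n • e (n + 1) := by
  rw [h.add_two, add_sub_cancel_right]

theorem det2_add_two (h : IsUnimodularChain c e) (n : ℤ) :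
    det2 (e n) (e (n + 2)) = c n * det2 (e n) (e (n + 1)) := by
  simp only [h.add_two, det2, Prod.fst_add, Prod.snd_add, Prod.smul_fst, Prod.smul_snd,
    smul_eq_mul]
  ring

theorem det2_succ (h : IsUnimodularChain c e) (n : ℤ) :
    det2 (e (n + 1)) (e (n + 2)) = -det2 (e n) (e (n + 1)) := by
  simp only [h.add_two, det2, Prod.fst_add, Prod.snd_add, Prod.smul_fst, Prod.smul_snd,
    smul_eq_mul]
  ring

theorem abs_det2 (h : IsUnimodularChain c e) (n : ℤ) : |det2 (e n) (e (n + 1))| = 1 := by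
  have hper : Function.Periodic (fun n => |det2 (e n) (e (n + 1))|) 1 := fun n => by
    simp only [add_assoc, one_add_one_eq_two, h.det2_succ, abs_neg]
  have hzero : |det2 (e 0) (e 1)| = 1 := Int.isUnit_iff_abs_eq.mp h.isUnit_det2_zero
  simpa [hzero] using hper.zsmul_eq n

theorem isCoprime (h : IsUnimodularChain c e) (n : ℤ) : IsCoprime (e n).1 (e n).2 :=
  isCoprime_of_isUnit_det2 (Int.isUnit_iff_abs_eq.mpr (h.abs_det2 n))

theorem llen_eq_abs (h : IsUnimodularChain c e) (n : ℤ) :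
    (llen (e n) (e (n + 2)) : ℤ) = |c n| :=
  llen_eq_abs_of_sub_eq_smul (h.isCoprime (n + 1)) (h.sub_eq_smul n)

theorem lsin_eq_abs (h : IsUnimodularChain c e) {n : ℤ} (hn : c n ≠ 0) (hn' : c (n + 2) ≠ 0) :
    lsin (e n) (e (n + 2)) (e (n + 2 + 2)) = (|c (n + 1)| : ℤ) := by
  have hdet : |det2 (e (n + 1)) (e (n + 2 + 1))| = |c (n + 1)| := by
    rw [add_right_comm, h.det2_add_two, abs_mul, h.abs_det2, mul_one]
  rw [lsin_eq_abs_det2_of_sub_eq_smul hn hn' (h.isCoprime _) (h.isCoprime _) (h.sub_eq_smul n)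
    (h.sub_eq_smul (n + 2)), hdet]

end IsUnimodularChain

section Concatenation

/-- The two-sided sequence `…, b₂, b₁, a₀, a₁, …`: the value at `n ≥ 0` is `aₙ`, the value at
`-n < 0` is `bₙ`, and `b₀` is dropped. -/
def concatSeq (a b : ℕ → ℤ) : ℤ → ℤ
  | Int.ofNat n => a n
  | Int.negSucc n => b (n + 1)

/-- The vectors `eₙ` of the unimodular chain through the sail: `(1, 0)` and `(0, 1)` at indices `0`
and `1`, which are `(q₋₂, p₋₂)` and `(q₋₁, p₋₁)`, then `eₙ₊₂ = (qₙ, pₙ)`, and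
`e₋ₙ = (-1)ⁿ (q̃ₙ, -p̃ₙ)` in the other direction. -/
def convergentChain (p q pt qt : ℕ → ℤ) : ℤ → ℤ × ℤ
  | Int.ofNat 0 => (1, 0)
  | Int.ofNat 1 => (0, 1)
  | Int.ofNat (n + 2) => (q n, p n)
  | Int.negSucc n => (-1 : ℤ) ^ (n + 1) • (qt (n + 1), -pt (n + 1))

variable {a b p q pt qt : ℕ → ℤ}

theorem concatSeq_neg_natCast {n : ℕ} (hn : n ≠ 0) : concatSeq a b (-(n : ℤ)) = b n := by
  obtain ⟨m, rfl⟩ := Nat.exists_eq_succ_of_ne_zero hn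
  rfl

theorem concatSeq_pos (ha : ∀ n, 0 < a n) (hb : ∀ n, 0 < b (n + 1)) (n : ℤ) :
    0 < concatSeq a b n := by
  cases n with
  | ofNat n => exact ha n
  | negSucc n => exact hb n

theorem convergentChain_natCast_add_two (ha : IsConvergents a p q) (n : ℕ) :
    convergentChain p q pt qt (n + 2) =
      a n • convergentChain p q pt qt (n + 1) + convergentChain p q pt qt n := by
  obtain ⟨hp0, hq0, hp1, hq1, hrec⟩ := ha
  match n with
  | 0 =>
    change (q 0, p 0) = a 0 • ((0 : ℤ), (1 : ℤ)) + (1, 0)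
    simp [hp0, hq0]
  | 1 =>
    change (q 1, p 1) = a 1 • (q 0, p 0) + (0, 1)
    simp [hp0, hq0, hp1, hq1]
  | n + 2 => exact Prod.ext (hrec n).2 (hrec n).1

theorem convergentChain_negSucc_add_two (hb : IsConvergents b pt qt) (hb0 : b 0 = 0) (n : ℕ) :
    convergentChain p q pt qt (Int.negSucc n + 2) =
      b (n + 1) • convergentChain p q pt qt (Int.negSucc n + 1) +
        convergentChain p q pt qt (Int.negSucc n) := by
  obtain ⟨hp0, hq0, hp1, hq1, hrec⟩ := hb
  match n with
  | 0 =>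
    change ((0 : ℤ), (1 : ℤ)) = b 1 • (1, 0) + (-1 : ℤ) ^ 1 • (qt 1, -pt 1)
    simp [hp1, hq1, hb0]
  | 1 =>
    change ((1 : ℤ), (0 : ℤ)) = b 2 • (-1 : ℤ) ^ 1 • (qt 1, -pt 1) + (-1 : ℤ) ^ 2 • (qt 2, -pt 2)
    simp [hrec 0, hp0, hq0, hp1, hq1, hb0]
  | n + 2 =>
    change (-1 : ℤ) ^ (n + 1) • (qt (n + 1), -pt (n + 1)) =
      b (n + 3) • (-1 : ℤ) ^ (n + 2) • (qt (n + 2), -pt (n + 2)) +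
        (-1 : ℤ) ^ (n + 3) • (qt (n + 3), -pt (n + 3))
    ext <;> simp only [hrec (n + 1), Prod.smul_mk, Prod.mk_add_mk, smul_eq_mul] <;> ring

theorem isUnimodularChain_convergentChain (ha : IsConvergents a p q) (hb : IsConvergents b pt qt)
    (hb0 : b 0 = 0) : IsUnimodularChain (concatSeq a b) (convergentChain p q pt qt) where
  add_two
    | Int.ofNat n => convergentChain_natCast_add_two ha n
    | Int.negSucc n => convergentChain_negSucc_add_two hb hb0 n
  isUnit_det2_zero := isUnit_one

theorem eq_convergentChain_two_mul {V : ℤ → ℤ × ℤ} (hV0 : V 0 = (1, 0))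
    (hVpos : ∀ k : ℕ, V ((k : ℤ) + 1) = (q (2 * k), p (2 * k)))
    (hVneg : ∀ k : ℕ, V (-((k : ℤ) + 1)) = (qt (2 * (k + 1)), -pt (2 * (k + 1)))) :
    ∀ k : ℤ, V k = convergentChain p q pt qt (2 * k)
  | Int.ofNat 0 => hV0
  | Int.ofNat (k + 1) => hVpos k
  | Int.negSucc k => by
    rw [Int.negSucc_eq, hVneg]
    change _ = (-1 : ℤ) ^ (2 * (k + 1)) • (qt (2 * (k + 1)), -pt (2 * (k + 1)))
    simp

end Concatenation

namespace IsCFExpansion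

variable {ξ : ℝ} {a : ℕ → ℤ}

theorem zero_eq_floor (h : IsCFExpansion ξ a) : a 0 = ⌊ξ⌋ := by
  obtain ⟨w, rfl, hw⟩ := h
  exact (hw 0).1

theorem succ_pos (h : IsCFExpansion ξ a) (hirr : Irrational ξ) (n : ℕ) : 0 < a (n + 1) := by
  obtain ⟨w, rfl, hw⟩ := h
  have hw_succ (k : ℕ) : w (k + 1) = (Int.fract (w k))⁻¹ := by
    rw [(hw k).2, (hw k).1, one_div, Int.fract]
  have hw_irr (k : ℕ) : Irrational (w k) := by
    induction k with
    | zero => exact hirr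
    | succ k ih => exact hw_succ k ▸ (ih.sub_intCast _).inv
  have hfract_pos : 0 < Int.fract (w n) := Int.fract_pos.mpr ((hw_irr n).ne_int _)
  rw [(hw (n + 1)).1, hw_succ, Int.floor_pos]
  exact (one_le_inv₀ hfract_pos).mpr (Int.fract_lt_one _).le

theorem pos (h : IsCFExpansion ξ a) (hirr : Irrational ξ) (hξ : 1 ≤ ξ) : ∀ n, 0 < a n
  | 0 => h.zero_eq_floor ▸ Int.floor_pos.mpr hξ
  | n + 1 => h.succ_pos hirr n

end IsCFExpansion

/-- Lemma 1 of the paper: the LLS sequence of the sail of the pair of lines `y = αx`,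
`y = βx` (with irrational `α > 1` and `−1 < β < 0`) is the concatenation
`…, b₄, b₃, b₂, b₁, a₀, a₁, a₂, a₃, …` of the continued fraction expansions
`α = [a₀; a₁, a₂, …]` and `−β = [0; b₁, b₂, …]`, where the sail vertices are ordered as
`V₋ₖ = (q̃₂ₖ, −p̃₂ₖ)` for `k ≥ 1`, `V₀ = (1, 0)`, `Vₖ = (q₂ₖ₋₂, p₂ₖ₋₂)` for `k ≥ 1`. -/
theorem lls_sequence_of_sail_of_pair_of_lines (α β : ℝ) (hα : 1 < α)
    (hβ₁ : -1 < β) (hβ₂ : β < 0) (hirrα : Irrational α) (hirrβ : Irrational β)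
    (a p q : ℕ → ℤ) (hcfa : IsCFExpansion α a) (hconva : IsConvergents a p q)
    (b pt qt : ℕ → ℤ) (hcfb : IsCFExpansion (-β) b) (hconvb : IsConvergents b pt qt)
    (V : ℤ → ℤ × ℤ) (hV0 : V 0 = (1, 0))
    (hVpos : ∀ k : ℕ, V ((k : ℤ) + 1) = (q (2 * k), p (2 * k)))
    (hVneg : ∀ k : ℕ, V (-((k : ℤ) + 1)) = (qt (2 * (k + 1)), -pt (2 * (k + 1)))) :
    (∀ k : ℕ, ((llen (V (k : ℤ)) (V ((k : ℤ) + 1)) : ℤ) = a (2 * k))) ∧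
      (∀ k : ℕ, lsin (V (k : ℤ)) (V ((k : ℤ) + 1)) (V ((k : ℤ) + 2)) = (a (2 * k + 1) : ℚ)) ∧
      (∀ k : ℕ, lsin (V (-((k : ℤ) + 1))) (V (-(k : ℤ))) (V (-(k : ℤ) + 1)) = (b (2 * k + 1) : ℚ)) ∧
      (∀ k : ℕ, ((llen (V (-((k : ℤ) + 1))) (V (-(k : ℤ))) : ℤ) = b (2 * (k + 1)))) := by
  have hb0 : b 0 = 0 :=
    hcfb.zero_eq_floor.trans (Int.floor_eq_zero_iff.mpr ⟨by linarith, by linarith⟩)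
  have hc_pos := concatSeq_pos (hcfa.pos hirrα hα.le) (hcfb.succ_pos hirrβ.neg)
  have hchain := isUnimodularChain_convergentChain hconva hconvb hb0
  have hV := eq_convergentChain_two_mul hV0 hVpos hVneg
  have hlen (k : ℤ) : (llen (V k) (V (k + 1)) : ℤ) = concatSeq a b (2 * k) := by
    simp only [hV, mul_add_one, hchain.llen_eq_abs, abs_of_pos (hc_pos _)]
  have hsin (k : ℤ) : lsin (V k) (V (k + 1)) (V (k + 1 + 1)) = concatSeq a b (2 * k + 1) := by
    simp only [hV, mul_add_one, hchain.lsin_eq_abs (hc_pos _).ne' (hc_pos _).ne',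
      abs_of_pos (hc_pos _)]
  have hneg_succ (k : ℕ) : -((k : ℤ) + 1) + 1 = -k := by ring
  refine ⟨fun k => hlen k, fun k => hsin k, fun k => ?_, fun k => ?_⟩
  · have hindex : 2 * -((k : ℤ) + 1) + 1 = -((2 * k + 1 : ℕ) : ℤ) := by push_cast; ring
    have h := hsin (-(k + 1))
    rwa [hneg_succ, hindex, concatSeq_neg_natCast (by positivity)] at h
  · have hindex : 2 * -((k : ℤ) + 1) = -((2 * (k + 1) : ℕ) : ℤ) := by push_cast; ring
    have h := hlen (-(k + 1))
    rwa [hneg_succ, hindex, concatSeq_neg_natCast (by positivity)] at h
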